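/- arXiv:1807.11166 — 2 statements merged into one kernel-verified Lean document; each statement's English description precedes it below -/
import Mathlib

section
/- Let X and Y be real normed linear spaces with X strictly convex, reflexive and complete. Let T : X → Y be a compact bounded linear operator that is left symmetric in the operator space with ‖T‖ = 1, suppose Tx = f(x)·w for all x, where w ∈ Y is a unit vector and f is a norm-one continuous linear functional on X, and suppose x₁ ∈ M_T. Then x₁ is a right symmetric point of X and w is a left symmetric point of Y. -/
open Filter Topology Set

/-- Birkhoff–James orthogonality: `x ⊥_B y` iff `‖x + t • y‖ ≥ ‖x‖` for all real `t`.
For bounded linear operators this is orthogonality in the operator norm. -/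
def BJOrth {E : Type*} [NormedAddCommGroup E] [NormedSpace ℝ E] (x y : E) : Prop :=
  ∀ t : ℝ, ‖x‖ ≤ ‖x + t • y‖

/-- A point `x` is left symmetric if `x ⊥_B y` implies `y ⊥_B x` for all `y`. -/
def LeftSymPt {E : Type*} [NormedAddCommGroup E] [NormedSpace ℝ E] (x : E) : Prop :=
  ∀ y : E, BJOrth x y → BJOrth y x

/-- A point `x` is right symmetric if `y ⊥_B x` implies `x ⊥_B y` for all `y`. -/
def RightSymPt {E : Type*} [NormedAddCommGroup E] [NormedSpace ℝ E] (x : E) : Prop :=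
  ∀ y : E, BJOrth y x → BJOrth x y

/-- A unit vector `x` is a smooth point if it has a unique norming functional. -/
def SmoothPt {E : Type*} [NormedAddCommGroup E] [NormedSpace ℝ E] (x : E) : Prop :=
  ∃! f : E →L[ℝ] ℝ, ‖f‖ = 1 ∧ f x = 1

/-- A normed space is reflexive if the canonical embedding into the double dual is surjective. -/
def ReflexiveSp (E : Type*) [NormedAddCommGroup E] [NormedSpace ℝ E] : Prop :=
  Function.Surjective (NormedSpace.inclusionInDoubleDual ℝ E)

/-- The Kadets–Klee property: weak convergence of a sequence together with convergence of norms
implies norm convergence. -/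
def KadetsKlee (E : Type*) [NormedAddCommGroup E] [NormedSpace ℝ E] : Prop :=
  ∀ (x : ℕ → E) (x₀ : E),
    (∀ f : E →L[ℝ] ℝ, Tendsto (fun n => f (x n)) atTop (nhds (f x₀))) →
    Tendsto (fun n => ‖x n‖) atTop (nhds ‖x₀‖) →
    Tendsto (fun n => ‖x n - x₀‖) atTop (nhds 0)

/-- The norm attaining set `M_T` of a bounded linear operator. -/
def normAttain {X Y : Type*} [NormedAddCommGroup X] [NormedSpace ℝ X]
    [NormedAddCommGroup Y] [NormedSpace ℝ Y] (T : X →L[ℝ] Y) : Set X :=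
  {x | ‖x‖ = 1 ∧ ‖T x‖ = ‖T‖}

/-- `inPlus u v` means `v ∈ u⁺`, i.e. `‖u + t • v‖ ≥ ‖u‖` for all `t ≥ 0`. -/
def inPlus {E : Type*} [NormedAddCommGroup E] [NormedSpace ℝ E] (u v : E) : Prop :=
  ∀ t : ℝ, 0 ≤ t → ‖u‖ ≤ ‖u + t • v‖

/-- `inMinus u v` means `v ∈ u⁻`, i.e. `‖u + t • v‖ ≥ ‖u‖` for all `t ≤ 0`. -/
def inMinus {E : Type*} [NormedAddCommGroup E] [NormedSpace ℝ E] (u v : E) : Prop :=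
  ∀ t : ℝ, t ≤ 0 → ‖u‖ ≤ ‖u + t • v‖

/-!
The maps `f ↦ f(·) w` and `w ↦ f(·) w` multiply norms by constants, so left symmetry of the operator
`f(·) w` passes to `f` in the dual and to `w` in `Y`.

For the right symmetry of `x₁`, let `y ⊥_B x₁` with `y ≠ 0`. By Hahn–Banach some norm-one `g`
norms `y` and kills `x₁`; as `f` attains its norm at `x₁`, this gives `f ⊥_B g`, and left symmetry
gives `g ⊥_B f`. So some norm-one functional on the dual norms `g` and kills `f`. Evaluation at
`y / ‖y‖` also norms `g`, and `g` is a smooth point of the dual: by reflexivity its norming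
functionals are evaluations at unit vectors where `g` attains its norm, and strict convexity allows
only one such vector. Hence the two functionals coincide and `f y = 0`; since `f` attains its norm
at `x₁`, this means `x₁ ⊥_B y`.
-/

section BirkhoffJames

variable {E F : Type*} [NormedAddCommGroup E] [NormedSpace ℝ E]
  [NormedAddCommGroup F] [NormedSpace ℝ F]

theorem bjOrth_zero_right (x : E) : BJOrth x 0 := fun t => by simp

theorem bjOrth_map_iff (L : E →ₗ[ℝ] F) {c : ℝ} (hc : 0 < c) (hL : ∀ x, ‖L x‖ = c * ‖x‖) {x y : E} :
    BJOrth (L x) (L y) ↔ BJOrth x y := by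
  simp only [BJOrth, ← map_smul, ← map_add, hL, mul_le_mul_iff_right₀ hc]

theorem LeftSymPt.of_map (L : E →ₗ[ℝ] F) {c : ℝ} (hc : 0 < c) (hL : ∀ x, ‖L x‖ = c * ‖x‖) {x : E}
    (h : LeftSymPt (L x)) : LeftSymPt x := fun y hxy =>
  (bjOrth_map_iff L hc hL).1 <| h (L y) <| (bjOrth_map_iff L hc hL).2 hxy

theorem LeftSymPt.of_smulRight_left {f : E →L[ℝ] ℝ} {w : F} (hw : w ≠ 0)
    (h : LeftSymPt (f.smulRight w)) : LeftSymPt f :=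
  .of_map ((ContinuousLinearMap.smulRightL ℝ E F).flip w).toLinearMap (norm_pos_iff.2 hw)
    (fun g => (g.norm_smulRight_apply w).trans (mul_comm _ _)) h

theorem LeftSymPt.of_smulRight_right {f : E →L[ℝ] ℝ} {w : F} (hf : f ≠ 0)
    (h : LeftSymPt (f.smulRight w)) : LeftSymPt w :=
  .of_map (ContinuousLinearMap.smulRightL ℝ E F f).toLinearMap (norm_pos_iff.2 hf)
    f.norm_smulRight_apply h

theorem normAttain_smulRight (f : E →L[ℝ] ℝ) {w : F} (hw : w ≠ 0) :
    normAttain (f.smulRight w) = normAttain f := by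
  ext x
  simp [normAttain, f.norm_smulRight_apply, norm_smul, hw]

theorem bjOrth_operator_of_mem_normAttain {T A : E →L[ℝ] F} {x : E} (hx : x ∈ normAttain T)
    (hAx : A x = 0) : BJOrth T A := fun t => calc
  ‖T‖ = ‖(T + t • A) x‖ := by simp [hAx, hx.2]
  _ ≤ ‖T + t • A‖ := (T + t • A).unit_le_opNorm x hx.1.le

theorem bjOrth_ker_of_mem_normAttain {T : E →L[ℝ] F} (hT : T ≠ 0) {x y : E}
    (hx : x ∈ normAttain T) (hTy : T y = 0) : BJOrth x y := fun t => by
  refine le_of_mul_le_mul_left ?_ (norm_pos_iff.2 hT)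
  calc
    ‖T‖ * ‖x‖ = ‖T (x + t • y)‖ := by simp [hTy, hx.1, hx.2]
    _ ≤ ‖T‖ * ‖x + t • y‖ := T.le_opNorm _

theorem BJOrth.norm_mk_span_singleton {x y : E} (h : BJOrth x y) :
    ‖(Submodule.Quotient.mk x : E ⧸ Submodule.span ℝ {y})‖ = ‖x‖ := by
  refine (Submodule.Quotient.norm_mk_le _ x).antisymm ?_
  refine QuotientAddGroup.le_norm_iff.2 fun z hz => ?_
  obtain ⟨t, ht⟩ := Submodule.mem_span_singleton.1 ((Submodule.Quotient.eq _).1 hz)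
  simpa [ht] using h t

theorem BJOrth.exists_dual_vector {x y : E} (h : BJOrth x y) (hx : x ≠ 0) :
    ∃ g : E →L[ℝ] ℝ, ‖g‖ = 1 ∧ g x = ‖x‖ ∧ g y = 0 := by
  set S := Submodule.span ℝ {y}
  have hx' : ‖x‖ ≠ 0 := norm_ne_zero_iff.2 hx
  obtain ⟨φ, hφ, hφx⟩ := _root_.exists_dual_vector ℝ (Submodule.Quotient.mk x : E ⧸ S)
    (by rwa [h.norm_mk_span_singleton])
  rw [h.norm_mk_span_singleton] at hφx
  set g : E →L[ℝ] ℝ := φ.comp S.mkQL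
  have hgx : g x = ‖x‖ := by simpa [g] using hφx
  have hgy : g y = 0 := by
    have hy : (Submodule.Quotient.mk y : E ⧸ S) = 0 :=
      (Submodule.Quotient.mk_eq_zero S).2 (Submodule.mem_span_singleton_self y)
    simp [g, hy]
  have hg_le : ‖g‖ ≤ 1 := g.opNorm_le_bound zero_le_one fun z => calc
    ‖g z‖ ≤ 1 * ‖(Submodule.Quotient.mk z : E ⧸ S)‖ := φ.le_of_opNorm_le hφ.le _
    _ ≤ 1 * ‖z‖ := by gcongr; exact Submodule.Quotient.norm_mk_le S z
  have hg_ge : 1 ≤ ‖g‖ := by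
    simpa [hgx, hx'] using g.ratio_le_opNorm x
  exact ⟨g, hg_le.antisymm hg_ge, hgx, hgy⟩

end BirkhoffJames

section Smooth

variable {E : Type*} [NormedAddCommGroup E] [NormedSpace ℝ E]

theorem SmoothPt.apply_eq_zero_of_bjOrth {x y : E} (hx : SmoothPt x) (hx_norm : ‖x‖ = 1)
    (hxy : BJOrth x y) {φ : E →L[ℝ] ℝ} (hφ : ‖φ‖ = 1) (hφx : φ x = 1) : φ y = 0 := by
  obtain ⟨g, hg, hgx, hgy⟩ := hxy.exists_dual_vector (norm_ne_zero_iff.1 (by simp [hx_norm]))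
  rwa [hx.unique ⟨hφ, hφx⟩ ⟨hg, hgx.trans hx_norm⟩]

theorem SmoothPt.apply_eq_zero_of_bjOrth_dual {f g : E →L[ℝ] ℝ} (hg : SmoothPt g)
    (hg_norm : ‖g‖ = 1) (hgf : BJOrth g f) {x : E} (hgx : g x = ‖x‖) : f x = 0 := by
  rcases eq_or_ne x 0 with rfl | hx
  · exact map_zero f
  have hx' : ‖x‖ ≠ 0 := norm_ne_zero_iff.2 hx
  set φ := NormedSpace.inclusionInDoubleDual ℝ E (‖x‖⁻¹ • x)
  have hφ : ‖φ‖ = 1 := by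
    rw [← norm_smul_inv_norm (𝕜 := ℝ) hx]
    exact (NormedSpace.inclusionInDoubleDualLi ℝ).norm_map _
  have hφg : φ g = 1 := by simp [φ, NormedSpace.dual_def, hgx, hx']
  have hφf : φ f = 0 := hg.apply_eq_zero_of_bjOrth hg_norm hgf hφ hφg
  simpa [φ, NormedSpace.dual_def, hx] using hφf

theorem eq_of_apply_eq_opNorm [StrictConvexSpace ℝ E] {g : E →L[ℝ] ℝ} (hg : g ≠ 0) {x y : E}
    (hx : ‖x‖ = 1) (hy : ‖y‖ = 1) (hgx : g x = ‖g‖) (hgy : g y = ‖g‖) : x = y := by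
  refine eq_of_norm_eq_of_norm_add_eq (hx.trans hy.symm) ((norm_add_le x y).antisymm ?_)
  refine le_of_mul_le_mul_left ?_ (norm_pos_iff.2 hg)
  calc
    ‖g‖ * (‖x‖ + ‖y‖) = g (x + y) := by rw [map_add, hgx, hgy, hx, hy]; ring
    _ ≤ ‖g (x + y)‖ := le_abs_self _
    _ ≤ ‖g‖ * ‖x + y‖ := g.le_opNorm _

theorem ReflexiveSp.smoothPt_dual [StrictConvexSpace ℝ E] (hE : ReflexiveSp E) {g : E →L[ℝ] ℝ}
    (hg : ‖g‖ = 1) : SmoothPt g := by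
  have hg0 : ‖g‖ ≠ 0 := by simp [hg]
  have norm_eval (x : E) : ‖NormedSpace.inclusionInDoubleDual ℝ E x‖ = ‖x‖ :=
    (NormedSpace.inclusionInDoubleDualLi ℝ).norm_map x
  obtain ⟨Φ, hΦ, hΦg⟩ := exists_dual_vector ℝ g hg0
  refine ⟨Φ, ⟨hΦ, by simp [hΦg, hg]⟩, ?_⟩
  rintro Ψ ⟨hΨ, hΨg⟩
  obtain ⟨x, rfl⟩ := hE Φ
  obtain ⟨y, rfl⟩ := hE Ψ
  rw [norm_eval] at hΦ hΨ
  rw [eq_of_apply_eq_opNorm (norm_ne_zero_iff.1 hg0) hΨ hΦ (hΨg.trans hg.symm) hΦg]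

theorem LeftSymPt.rightSymPt_of_mem_normAttain {f : E →L[ℝ] ℝ} (hfsym : LeftSymPt f) (hf : f ≠ 0)
    (hsmooth : ∀ g : E →L[ℝ] ℝ, ‖g‖ = 1 → (normAttain g).Nonempty → SmoothPt g)
    {x : E} (hx : x ∈ normAttain f) :
    RightSymPt x := by
  intro y hyx
  rcases eq_or_ne y 0 with rfl | hy
  · exact bjOrth_zero_right x
  obtain ⟨g, hg, hgy, hgx⟩ := hyx.exists_dual_vector hy
  have hg_attain : ‖y‖⁻¹ • y ∈ normAttain g := by
    simp [normAttain, norm_smul, hg, hgy, hy]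
  have hgf : BJOrth g f := hfsym g (bjOrth_operator_of_mem_normAttain hx hgx)
  have hfy : f y = 0 :=
    (hsmooth g hg ⟨_, hg_attain⟩).apply_eq_zero_of_bjOrth_dual hg hgf hgy
  exact bjOrth_ker_of_mem_normAttain hf hx hfy

end Smooth

theorem rank_one_left_symmetric_operator_symmetric_points_general
    {X Y : Type*} [NormedAddCommGroup X] [NormedSpace ℝ X]
    [NormedAddCommGroup Y] [NormedSpace ℝ Y]
    (hsmooth : ∀ g : X →L[ℝ] ℝ, ‖g‖ = 1 → (normAttain g).Nonempty → SmoothPt g)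
    {f : X →L[ℝ] ℝ} (hf : f ≠ 0) {w : Y} (hw : w ≠ 0) (hsym : LeftSymPt (f.smulRight w))
    {x₁ : X} (hx₁ : x₁ ∈ normAttain (f.smulRight w)) :
    RightSymPt x₁ ∧ LeftSymPt w := by
  rw [normAttain_smulRight f hw] at hx₁
  exact ⟨(hsym.of_smulRight_left hw).rightSymPt_of_mem_normAttain hf hsmooth hx₁,
    hsym.of_smulRight_right hf⟩

theorem rank_one_left_symmetric_operator_symmetric_points
    {X Y : Type*} [NormedAddCommGroup X] [NormedSpace ℝ X]
    [StrictConvexSpace ℝ X] [CompleteSpace X]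
    [NormedAddCommGroup Y] [NormedSpace ℝ Y]
    (hrefl : ReflexiveSp X)
    (T : X →L[ℝ] Y) (hTcpt : IsCompactOperator T)
    (hTsym : LeftSymPt T) (hTnorm : ‖T‖ = 1)
    (w : Y) (hw : ‖w‖ = 1) (f : X →L[ℝ] ℝ) (hf : ‖f‖ = 1)
    (hTrank : ∀ x : X, T x = f x • w)
    (x₁ : X) (hx₁ : x₁ ∈ normAttain T) :
    RightSymPt x₁ ∧ LeftSymPt w := by
  obtain rfl : T = f.smulRight w := ContinuousLinearMap.ext hTrank
  exact rank_one_left_symmetric_operator_symmetric_points_general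
    (fun _ hg _ => hrefl.smoothPt_dual hg) (norm_ne_zero_iff.1 (by simp [hf]))
    (norm_ne_zero_iff.1 (by simp [hw])) hTsym hx₁
end

section
/- Let X and Y be real reflexive Banach spaces with Y smooth (every unit vector of Y is a smooth point). Let T : X → Y be a compact bounded linear operator that is left symmetric in the operator space with ‖T‖ = 1. Then there exist a unit vector w ∈ Y and a norm-one continuous linear functional f on X such that Tx = f(x)·w for all x ∈ X, and w is a left symmetric point of Y. -/
open Filter Topology Set

/-!
Let `C` be the closure of the image of the unit ball under the compact operator `T`. It is compact,
so every operator of the form `L ∘ T` attains its norm on `C`, even if it does not attain it on the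
unit ball. Fix `w ∈ C` with `‖w‖ = ‖T‖`, and let `ψ` be a functional with `ψ w = 0`. If
`ψ ∘ T ≠ 0`, let `z` be a point of least norm in the face of `C` on which `ψ` is maximal, and
consider the rank one operator `A x = ψ (T x) • z`. Since `ψ w = 0`, `T ⊥_B A`, hence `A ⊥_B T`.
The latter yields a point `v` of the face at which some support functional of `z` is nonpositive.
Separating the face from the ball of radius `‖z‖` yields a support functional of `z` which is
positive on the whole face, and this contradicts smoothness at `z`. So every functional vanishing
at `w` vanishes on the range of `T`, which is therefore spanned by `w`.
-/

section NormedGeometry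

variable {E : Type*} [NormedAddCommGroup E] [NormedSpace ℝ E]

theorem opNorm_mul_le_of_forall_mem_ball_le {f : E →L[ℝ] ℝ} {r u : ℝ} (hr : 0 < r)
    (hf : ∀ x ∈ Metric.ball (0 : E) r, f x ≤ u) : ‖f‖ * r ≤ u := by
  by_contra! hlt
  obtain ⟨x, hx, hux⟩ := f.exists_lt_apply_of_lt_opNorm ((div_lt_iff₀ hr).mpr hlt)
  have hmem : ∀ y : E, ‖y‖ < 1 → r • y ∈ Metric.ball (0 : E) r := fun y hy => by
    rw [mem_ball_zero_iff, norm_smul, Real.norm_of_nonneg hr.le]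
    exact mul_lt_of_lt_one_right hr hy
  have hpos := hf _ (hmem x hx)
  have hneg := hf _ (hmem (-x) (by rwa [norm_neg]))
  simp only [map_smul, map_neg, smul_eq_mul] at hpos hneg
  rw [div_lt_iff₀ hr, Real.norm_eq_abs] at hux
  rcases abs_cases (f x) with ⟨habs, -⟩ | ⟨habs, -⟩ <;> rw [habs] at hux <;> linarith

theorem exists_norm_eq_one_forall_le_apply {S : Set E} (hconv : Convex ℝ S) (hne : S.Nonempty)
    {r : ℝ} (hr : 0 < r) (hS : ∀ s ∈ S, r ≤ ‖s‖) :
    ∃ f : E →L[ℝ] ℝ, ‖f‖ = 1 ∧ ∀ s ∈ S, r ≤ f s := by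
  have hdisj : Disjoint (Metric.ball (0 : E) r) S :=
    disjoint_left.mpr fun s hs hsS => (hS s hsS).not_gt (mem_ball_zero_iff.mp hs)
  obtain ⟨f, u, hball, hfS⟩ :=
    geometric_hahn_banach_open (convex_ball 0 r) Metric.isOpen_ball hconv hdisj
  have hu : 0 < u := by simpa using hball 0 (Metric.mem_ball_self hr)
  have hf : 0 < ‖f‖ := by
    obtain ⟨s, hs⟩ := hne
    refine norm_pos_iff.mpr ?_
    rintro rfl
    exact hu.not_ge (hfS s hs)
  refine ⟨‖f‖⁻¹ • f, by simp [norm_smul, hf.ne'], fun s hs => ?_⟩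
  calc r = ‖f‖⁻¹ * (‖f‖ * r) := (inv_mul_cancel_left₀ hf.ne' r).symm
    _ ≤ ‖f‖⁻¹ * f s := by
      gcongr
      exact (opNorm_mul_le_of_forall_mem_ball_le hr fun x hx => (hball x hx).le).trans (hfS s hs)

theorem apply_le_norm_of_norm_le_one {f : E →L[ℝ] ℝ} (hf : ‖f‖ ≤ 1) (x : E) : f x ≤ ‖x‖ :=
  (le_abs_self (f x)).trans (by simpa using f.le_of_opNorm_le hf x)

theorem exists_support_functional_pos_of_isCompact {K : Set E} (hK : IsCompact K)
    (hconv : Convex ℝ K) (hne : K.Nonempty) (h0 : (0 : E) ∉ K) :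
    ∃ z ≠ 0, ∃ f : E →L[ℝ] ℝ, ‖f‖ = 1 ∧ f z = ‖z‖ ∧ ∀ v ∈ K, 0 < f v := by
  obtain ⟨z, hzK, hmin⟩ := hK.exists_isMinOn hne continuous_norm.continuousOn
  have hz : z ≠ 0 := ne_of_mem_of_not_mem hzK h0
  obtain ⟨f, hf, hfK⟩ := exists_norm_eq_one_forall_le_apply hconv hne (norm_pos_iff.mpr hz) hmin
  exact ⟨z, hz, f, hf, (apply_le_norm_of_norm_le_one hf.le z).antisymm (hfK z hzK),
    fun v hv => (norm_pos_iff.mpr hz).trans_le (hfK v hv)⟩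

theorem inMinus.exists_support_functional {u v : E} (h : inMinus u v) (hu : u ≠ 0) :
    ∃ f : E →L[ℝ] ℝ, ‖f‖ = 1 ∧ f u = ‖u‖ ∧ f v ≤ 0 := by
  let ray : Set E := (fun t : ℝ => u + t • v) '' Iic 0
  have hconv : Convex ℝ ray := by
    have : ray = (fun y => u + y) '' (LinearMap.toSpanSingleton ℝ E v '' Iic 0) := by
      simp [ray, image_image]
    rw [this]
    exact ((convex_Iic 0).linear_image _).translate u
  have hray : ∀ s ∈ ray, ‖u‖ ≤ ‖s‖ := forall_mem_image.mpr h
  obtain ⟨f, hf, hle⟩ := exists_norm_eq_one_forall_le_apply hconv (nonempty_Iic.image _)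
    (norm_pos_iff.mpr hu) hray
  have hu' : ‖u‖ ≤ f u := hle u ⟨0, by simp⟩
  have hfu : f u = ‖u‖ := (apply_le_norm_of_norm_le_one hf.le u).antisymm hu'
  have huv : ‖u‖ ≤ f u - f v := by
    simpa [sub_eq_add_neg] using hle (u + (-1 : ℝ) • v) ⟨-1, by simp, rfl⟩
  exact ⟨f, hf, hfu, by linarith⟩

theorem SmoothPt.eq_of_apply_eq_norm {u : E} (hu : u ≠ 0) (hsm : SmoothPt (‖u‖⁻¹ • u))
    {f g : E →L[ℝ] ℝ} (hf : ‖f‖ = 1) (hfu : f u = ‖u‖) (hg : ‖g‖ = 1) (hgu : g u = ‖u‖) :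
    f = g := by
  have hu' : ‖u‖ ≠ 0 := norm_ne_zero_iff.mpr hu
  exact hsm.unique ⟨hf, by simp [hfu, hu']⟩ ⟨hg, by simp [hgu, hu']⟩

theorem le_norm_add_smul_of_le {p v : E} {M s t : ℝ} (hp : ‖p‖ ≤ M) (hs : 0 < s) (hst : s ≤ t)
    (hM : M ≤ ‖p + s • v‖) : M ≤ ‖p + t • v‖ := by
  have ht : 0 < t := hs.trans_le hst
  have hcomb : t • (p + s • v) = (t - s) • p + s • (p + t • v) := by module
  have hle : t * M ≤ (t - s) * M + s * ‖p + t • v‖ :=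
    calc t * M ≤ ‖t • (p + s • v)‖ := by
          rw [norm_smul, Real.norm_of_nonneg ht.le]
          gcongr
      _ ≤ ‖(t - s) • p‖ + ‖s • (p + t • v)‖ := hcomb ▸ norm_add_le _ _
      _ = (t - s) * ‖p‖ + s * ‖p + t • v‖ := by
          rw [norm_smul, norm_smul, Real.norm_of_nonneg (sub_nonneg.mpr hst),
            Real.norm_of_nonneg hs.le]
      _ ≤ (t - s) * M + s * ‖p + t • v‖ := by
          have := sub_nonneg.mpr hst
          gcongr
  exact le_of_mul_le_mul_left (by linarith) hs

end NormedGeometry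

section ClosedUnitImage

variable {X Y Z : Type*} [NormedAddCommGroup X] [NormedSpace ℝ X]
  [NormedAddCommGroup Y] [NormedSpace ℝ Y] [NormedAddCommGroup Z] [NormedSpace ℝ Z]

/-- The closure of the image of the closed unit ball under `T`. For compact `T` it is compact, and
its points replace the norm attaining vectors of `T`, which need not exist. -/
def closedUnitImage (T : X →L[ℝ] Y) : Set Y :=
  closure (T '' Metric.closedBall 0 1)

namespace closedUnitImage

variable {T : X →L[ℝ] Y}

theorem isCompact (hT : IsCompactOperator T) : IsCompact (closedUnitImage T) :=
  hT.isCompact_closure_image_closedBall 1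

theorem convex (T : X →L[ℝ] Y) : Convex ℝ (closedUnitImage T) :=
  ((convex_closedBall 0 1).linear_image T.toLinearMap).closure

theorem nonempty (T : X →L[ℝ] Y) : (closedUnitImage T).Nonempty :=
  ((Metric.nonempty_closedBall.mpr zero_le_one).image T).closure

theorem neg_mem {v : Y} (hv : v ∈ closedUnitImage T) : -v ∈ closedUnitImage T := by
  refine map_mem_closure continuous_neg hv ?_
  rintro _ ⟨x, hx, rfl⟩
  exact ⟨-x, by simpa using hx, map_neg T x⟩

theorem norm_apply_le {v : Y} (hv : v ∈ closedUnitImage T) (L : Y →L[ℝ] Z) :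
    ‖L v‖ ≤ ‖L.comp T‖ := by
  refine closure_minimal ?_ (isClosed_le L.continuous.norm continuous_const) hv
  rintro _ ⟨x, hx, rfl⟩
  exact (L.comp T).unit_le_opNorm x (mem_closedBall_zero_iff.mp hx)

theorem exists_norm_apply_eq (hT : IsCompactOperator T) (L : Y →L[ℝ] Z) :
    ∃ v ∈ closedUnitImage T, ‖L v‖ = ‖L.comp T‖ := by
  obtain ⟨v, hv, hmax⟩ :=
    (isCompact hT).exists_isMaxOn (nonempty T) L.continuous.norm.continuousOn
  refine ⟨v, hv, (norm_apply_le hv L).antisymm ?_⟩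
  refine (L.comp T).opNorm_le_of_unit_norm (norm_nonneg _) fun x hx => ?_
  exact hmax (subset_closure ⟨x, by simp [hx], rfl⟩)

theorem exists_norm_eq (hT : IsCompactOperator T) : ∃ w ∈ closedUnitImage T, ‖w‖ = ‖T‖ :=
  exists_norm_apply_eq hT (.id ℝ Y)

theorem exists_apply_eq (hT : IsCompactOperator T) (ψ : Y →L[ℝ] ℝ) :
    ∃ v ∈ closedUnitImage T, ψ v = ‖ψ.comp T‖ := by
  obtain ⟨v, hv, hψv⟩ := exists_norm_apply_eq hT ψ
  rcases abs_choice (ψ v) with habs | habs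
  · exact ⟨v, hv, by rw [← hψv, Real.norm_eq_abs, habs]⟩
  · exact ⟨-v, neg_mem hv, by rw [← hψv, Real.norm_eq_abs, habs, map_neg]⟩

end closedUnitImage

variable {T : X →L[ℝ] Y}

theorem BJOrth.comp_of_norm_eq {w : Y} (hw : w ∈ closedUnitImage T) (hnorm : ‖w‖ = ‖T‖)
    {L : Y →L[ℝ] Y} (h : BJOrth w (L w)) : BJOrth T (L.comp T) := fun t => by
  rw [← hnorm]
  exact (h t).trans (closedUnitImage.norm_apply_le hw (.id ℝ Y + t • L))

/-- A form of the Bhatia–Šemrl theorem: orthogonality of operators is detected, one side at a time,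
at a point where the norm is attained. -/
theorem BJOrth.exists_inMinus_of_comp (hT : IsCompactOperator T) {L M : Y →L[ℝ] Z}
    (h : BJOrth (L.comp T) (M.comp T)) :
    ∃ v ∈ closedUnitImage T, ‖L v‖ = ‖L.comp T‖ ∧ inMinus (L v) (M v) := by
  -- By convexity `D s` grows with `s`, so these compact sets have a common point.
  let D : Ioi (0 : ℝ) → Set Y := fun s =>
    {v ∈ closedUnitImage T | ‖L.comp T‖ ≤ ‖L v + (s : ℝ) • -M v‖}
  have hmono : Monotone D := fun s t hst v hv =>
    ⟨hv.1, le_norm_add_smul_of_le (closedUnitImage.norm_apply_le hv.1 L) s.2 hst hv.2⟩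
  have hcompact : ∀ s, IsCompact (D s) := fun s =>
    (closedUnitImage.isCompact hT).inter_right (isClosed_le continuous_const
      (L.continuous.add (M.continuous.neg.const_smul _)).norm)
  have hnonempty : ∀ s, (D s).Nonempty := fun s => by
    obtain ⟨v, hv, hnorm⟩ :=
      closedUnitImage.exists_norm_apply_eq hT (L + (-s : ℝ) • M)
    refine ⟨v, hv, ?_⟩
    calc ‖L.comp T‖ ≤ ‖(L + (-s : ℝ) • M).comp T‖ := h (-s)
      _ = ‖(L + (-s : ℝ) • M) v‖ := hnorm.symm
      _ = ‖L v + (s : ℝ) • -M v‖ := by simp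
  obtain ⟨v, hv⟩ := IsCompact.nonempty_iInter_of_directed_nonempty_isCompact_isClosed D
    hmono.directed_ge hnonempty hcompact fun s => (hcompact s).isClosed
  rw [mem_iInter] at hv
  have hvC : v ∈ closedUnitImage T := (hv ⟨1, mem_Ioi.mpr one_pos⟩).1
  have hIci : Ici (0 : ℝ) ⊆ {s : ℝ | ‖L.comp T‖ ≤ ‖L v + s • -M v‖} := by
    rw [← closure_Ioi]
    exact closure_minimal (fun s hs => (hv ⟨s, hs⟩).2)
      (isClosed_le continuous_const (by fun_prop))
  have hLv : ‖L v‖ = ‖L.comp T‖ :=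
    (closedUnitImage.norm_apply_le hvC L).antisymm (by simpa using hIci self_mem_Ici)
  refine ⟨v, hvC, hLv, fun t ht => hLv ▸ ?_⟩
  simpa using hIci (mem_Ici.mpr (neg_nonneg.mpr ht))

end ClosedUnitImage

section LeftSymmetric

variable {X Y : Type*} [NormedAddCommGroup X] [NormedSpace ℝ X]
  [NormedAddCommGroup Y] [NormedSpace ℝ Y] {T : X →L[ℝ] Y}

theorem exists_support_functional_pos_on_maximal_face (hT : IsCompactOperator T)
    {ψ : Y →L[ℝ] ℝ} (hψ : ψ.comp T ≠ 0) :
    ∃ z ≠ 0, ∃ f : Y →L[ℝ] ℝ, ‖f‖ = 1 ∧ f z = ‖z‖ ∧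
      ∀ v ∈ closedUnitImage T, ψ v = ‖ψ.comp T‖ → 0 < f v := by
  let face : Set Y := closedUnitImage T ∩ {v | ψ v = ‖ψ.comp T‖}
  have hcompact : IsCompact face :=
    (closedUnitImage.isCompact hT).inter_right (isClosed_eq ψ.continuous continuous_const)
  have hconv : Convex ℝ face :=
    (closedUnitImage.convex T).inter (convex_hyperplane ψ.isLinear _)
  have h0 : (0 : Y) ∉ face := fun h => hψ <| norm_eq_zero.mp <| by simpa using h.2.symm
  obtain ⟨z, hz, f, hf, hfz, hpos⟩ := exists_support_functional_pos_of_isCompact hcompact hconv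
    (closedUnitImage.exists_apply_eq hT ψ) h0
  exact ⟨z, hz, f, hf, hfz, fun v hv hψv => hpos v ⟨hv, hψv⟩⟩

theorem BJOrth.exists_support_functional_nonpos_on_maximal_face (hT : IsCompactOperator T)
    {ψ : Y →L[ℝ] ℝ} (hψ : ψ.comp T ≠ 0) {z : Y} (hz : z ≠ 0)
    (h : BJOrth ((ψ.comp T).smulRight z) T) :
    ∃ v ∈ closedUnitImage T, ψ v = ‖ψ.comp T‖ ∧
      ∃ f : Y →L[ℝ] ℝ, ‖f‖ = 1 ∧ f z = ‖z‖ ∧ f v ≤ 0 := by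
  obtain ⟨v, hv, hnorm, hminus⟩ :=
    BJOrth.exists_inMinus_of_comp (L := ψ.smulRight z) (M := .id ℝ Y) hT h
  have hψpos : 0 < ‖ψ.comp T‖ := norm_pos_iff.mpr hψ
  have habs : |ψ v| = ‖ψ.comp T‖ := by
    change ‖ψ v • z‖ = ‖(ψ.comp T).smulRight z‖ at hnorm
    rw [norm_smul, ContinuousLinearMap.norm_smulRight_apply] at hnorm
    exact mul_right_cancel₀ (norm_ne_zero_iff.mpr hz) hnorm
  have hψv : ψ v ≠ 0 := abs_pos.mp (habs ▸ hψpos)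
  obtain ⟨f, hf, hfu, hfv⟩ := hminus.exists_support_functional (smul_ne_zero hψv hz)
  change f (ψ v • z) = ‖ψ v • z‖ at hfu
  rw [map_smul, smul_eq_mul, norm_smul, Real.norm_eq_abs, habs] at hfu
  rcases eq_or_eq_neg_of_abs_eq habs with hval | hval <;> rw [hval] at hfu
  · exact ⟨v, hv, hval, f, hf, mul_left_cancel₀ hψpos.ne' hfu, hfv⟩
  · refine ⟨-v, closedUnitImage.neg_mem hv, by rw [map_neg, hval, neg_neg], -f,
      by rwa [norm_neg], mul_left_cancel₀ hψpos.ne' ?_, by simpa using hfv⟩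
    simpa using hfu

theorem LeftSymPt.comp_eq_zero_of_apply_eq_zero (hsm : ∀ y : Y, ‖y‖ = 1 → SmoothPt y)
    (hT : IsCompactOperator T) (hsym : LeftSymPt T) {w : Y} (hw : w ∈ closedUnitImage T)
    (hnorm : ‖w‖ = ‖T‖) {ψ : Y →L[ℝ] ℝ} (hψw : ψ w = 0) : ψ.comp T = 0 := by
  by_contra hψ
  obtain ⟨z, hz, f, hf, hfz, hpos⟩ := exists_support_functional_pos_on_maximal_face hT hψ
  have hTA : BJOrth T ((ψ.comp T).smulRight z) :=
    BJOrth.comp_of_norm_eq (L := ψ.smulRight z) hw hnorm fun t => by simp [hψw]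
  obtain ⟨v, hv, hψv, g, hg, hgz, hgv⟩ :=
    (hsym _ hTA).exists_support_functional_nonpos_on_maximal_face hT hψ hz
  have hfg : f = g := SmoothPt.eq_of_apply_eq_norm hz
    (hsm _ (norm_smul_inv_norm (𝕜 := ℝ) hz)) hf hfz hg hgz
  exact (hpos v hv hψv).not_ge (hfg ▸ hgv)

theorem eq_smulRight_of_forall_comp_eq_zero {w : Y} {g : Y →L[ℝ] ℝ} (hg : g w = 1)
    (h : ∀ ψ : Y →L[ℝ] ℝ, ψ w = 0 → ψ.comp T = 0) : T = (g.comp T).smulRight w := by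
  ext x
  refine (SeparatingDual.eq_iff_forall_dual_eq (R := ℝ)).mpr fun ψ => ?_
  have hzero : ψ (T x) - ψ w * g (T x) = 0 :=
    DFunLike.congr_fun (h (ψ - ψ w • g) (by simp [hg])) x
  simpa [mul_comm] using sub_eq_zero.mp hzero

theorem bjOrth_smulRight_iff {f : X →L[ℝ] ℝ} (hf : f ≠ 0) {a b : Y} :
    BJOrth (f.smulRight a) (f.smulRight b) ↔ BJOrth a b := by
  refine forall_congr' fun t => ?_
  have hadd : f.smulRight a + t • f.smulRight b = f.smulRight (a + t • b) := by
    ext x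
    simp [smul_comm t]
  rw [hadd, ContinuousLinearMap.norm_smulRight_apply, ContinuousLinearMap.norm_smulRight_apply,
    mul_le_mul_iff_right₀ (norm_pos_iff.mpr hf)]

theorem LeftSymPt.of_smulRight {f : X →L[ℝ] ℝ} (hf : f ≠ 0) {w : Y}
    (hsym : LeftSymPt (f.smulRight w)) : LeftSymPt w := fun _ hy =>
  (bjOrth_smulRight_iff hf).mp (hsym _ ((bjOrth_smulRight_iff hf).mpr hy))

end LeftSymmetric

theorem left_symmetric_compact_operator_rank_one_left_symmetric_vector_general
    {X Y : Type*} [NormedAddCommGroup X] [NormedSpace ℝ X]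
    [NormedAddCommGroup Y] [NormedSpace ℝ Y]
    (hYsmooth : ∀ y : Y, ‖y‖ = 1 → SmoothPt y)
    (T : X →L[ℝ] Y) (hTcpt : IsCompactOperator T)
    (hTsym : LeftSymPt T) (hTnorm : ‖T‖ = 1) :
    ∃ (w : Y) (f : X →L[ℝ] ℝ), ‖w‖ = 1 ∧ ‖f‖ = 1 ∧
      (∀ x : X, T x = f x • w) ∧ LeftSymPt w := by
  obtain ⟨w, hw, hwT⟩ := closedUnitImage.exists_norm_eq hTcpt
  have hw1 : ‖w‖ = 1 := hwT.trans hTnorm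
  obtain ⟨g, ⟨-, hgw⟩, -⟩ := hYsmooth w hw1
  have hT : T = (g.comp T).smulRight w := eq_smulRight_of_forall_comp_eq_zero hgw fun _ hψ =>
    hTsym.comp_eq_zero_of_apply_eq_zero hYsmooth hTcpt hw hwT hψ
  have hf : ‖g.comp T‖ = 1 := by
    rw [← hTnorm, congrArg norm hT, ContinuousLinearMap.norm_smulRight_apply, hw1, mul_one]
  have hf0 : g.comp T ≠ 0 := norm_ne_zero_iff.mp (hf ▸ one_ne_zero)
  exact ⟨w, g.comp T, hw1, hf, DFunLike.congr_fun hT, .of_smulRight hf0 (hT ▸ hTsym)⟩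

theorem left_symmetric_compact_operator_rank_one_left_symmetric_vector
    {X Y : Type*} [NormedAddCommGroup X] [NormedSpace ℝ X] [CompleteSpace X]
    [NormedAddCommGroup Y] [NormedSpace ℝ Y] [CompleteSpace Y]
    (hXrefl : ReflexiveSp X) (hYrefl : ReflexiveSp Y)
    (hYsmooth : ∀ y : Y, ‖y‖ = 1 → SmoothPt y)
    (T : X →L[ℝ] Y) (hTcpt : IsCompactOperator T)
    (hTsym : LeftSymPt T) (hTnorm : ‖T‖ = 1) :
    ∃ (w : Y) (f : X →L[ℝ] ℝ), ‖w‖ = 1 ∧ ‖f‖ = 1 ∧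
      (∀ x : X, T x = f x • w) ∧ LeftSymPt w :=
  left_symmetric_compact_operator_rank_one_left_symmetric_vector_general
    hYsmooth T hTcpt hTsym hTnorm
end
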